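/- Every pair (k,p) with k ∈ ℤ^4 and p ∈ ℤ^12 having nonnegative entries such that p ∈ Σ(k) can be written as a sum, with nonnegative integer coefficients, of the 52 fundamental generators. (This is the saturation property — Conjecture 2 of Vinberg — for the semigroup of essential signatures of type D4: the semigroup generated by the essential signatures of fundamental highest weights contains every lattice point of the cone it spans.) -/

import Mathlib

/-- The 70 linear inequalities defining Σ(k). -/
def SatisfiesIneqs (k : Fin 4 → ℤ) (p : Fin 12 → ℤ) : Prop :=
  p 11 ≤ k 0 ∧
  p 10 ≤ k 1 ∧
  p 8 ≤ k 2 ∧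
  p 3 ≤ k 3 ∧
  p 6 + p 10 + p 11 ≤ k 0 + k 1 ∧
  p 6 + p 7 + p 8 + p 9 + p 11 ≤ k 0 + k 1 + k 2 ∧
  p 6 + p 8 + p 9 + p 10 + p 11 ≤ k 0 + k 1 + k 2 ∧
  p 8 + p 9 + p 10 ≤ k 1 + k 2 ∧
  p 3 + p 4 + p 5 + p 6 + p 11 ≤ k 0 + k 1 + k 3 ∧
  p 3 + p 4 + p 6 + p 10 + p 11 ≤ k 0 + k 1 + k 3 ∧
  p 3 + p 4 + p 10 ≤ k 1 + k 3 ∧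
  p 1 + p 3 + p 4 + p 8 + p 9 ≤ k 1 + k 2 + k 3 ∧
  p 3 + p 4 + p 8 + p 9 + p 10 ≤ k 1 + k 2 + k 3 ∧
  p 2 + p 3 + p 4 + p 5 + p 6 + p 8 + p 11 ≤ k 0 + k 1 + k 2 + k 3 ∧
  p 1 + p 2 + p 3 + p 4 + p 6 + p 8 + p 11 ≤ k 0 + k 1 + k 2 + k 3 ∧
  p 1 + p 2 + p 3 + p 6 + p 7 + p 8 + p 11 ≤ k 0 + k 1 + k 2 + k 3 ∧
  p 1 + p 3 + p 6 + p 7 + p 8 + p 9 + p 11 ≤ k 0 + k 1 + k 2 + k 3 ∧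
  p 3 + p 4 + p 6 + p 8 + p 9 + p 10 + p 11 ≤ k 0 + k 1 + k 2 + k 3 ∧
  p 1 + p 3 + p 4 + p 6 + p 8 + p 9 + p 11 ≤ k 0 + k 1 + k 2 + k 3 ∧
  p 0 + p 2 + p 3 + p 4 + p 5 + p 6 + p 7 + p 8 + p 10 ≤ k 0 + 2 * k 1 + k 2 + k 3 ∧
  p 0 + p 1 + p 2 + p 3 + p 4 + p 6 + p 7 + p 8 + p 10 ≤ k 0 + 2 * k 1 + k 2 + k 3 ∧
  p 2 + p 3 + p 4 + p 5 + p 6 + p 7 + p 8 + p 10 + p 11 ≤ k 0 + 2 * k 1 + k 2 + k 3 ∧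
  p 1 + p 2 + p 3 + p 4 + p 6 + p 7 + p 8 + p 10 + p 11 ≤ k 0 + 2 * k 1 + k 2 + k 3 ∧
  p 0 + p 1 + p 3 + p 4 + p 6 + p 7 + p 8 + p 9 + p 10 ≤ k 0 + 2 * k 1 + k 2 + k 3 ∧
  p 1 + p 3 + p 4 + p 6 + p 7 + p 8 + p 9 + p 10 + p 11 ≤ k 0 + 2 * k 1 + k 2 + k 3 ∧
  p 0 + p 3 + p 4 + p 5 + p 6 + p 7 + p 8 + p 9 + p 10 ≤ k 0 + 2 * k 1 + k 2 + k 3 ∧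
  p 3 + p 4 + p 5 + p 6 + p 7 + p 8 + p 9 + p 10 + p 11 ≤ k 0 + 2 * k 1 + k 2 + k 3 ∧
  p 1 + p 2 + p 3 + p 4 + p 6 + p 7 + 2 * p 8 + p 9 + p 10 + p 11 ≤ k 0 + 2 * k 1 + 2 * k 2 + k 3 ∧
  p 2 + p 3 + p 4 + p 5 + p 6 + p 7 + 2 * p 8 + p 9 + p 10 + p 11 ≤ k 0 + 2 * k 1 + 2 * k 2 + k 3 ∧
  p 0 + p 1 + p 2 + p 3 + p 4 + p 6 + p 7 + 2 * p 8 + p 9 + p 10 ≤ k 0 + 2 * k 1 + 2 * k 2 + k 3 ∧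
  p 0 + p 2 + p 3 + p 4 + p 5 + p 6 + p 7 + 2 * p 8 + p 9 + p 10 ≤ k 0 + 2 * k 1 + 2 * k 2 + k 3 ∧
  p 1 + p 3 + p 4 + p 6 + p 7 + 2 * p 8 + 2 * p 9 + p 10 + p 11 ≤ k 0 + 2 * k 1 + 2 * k 2 + k 3 ∧
  p 1 + p 2 + 2 * p 3 + p 4 + p 5 + p 6 + p 7 + p 8 + p 10 + p 11 ≤ k 0 + 2 * k 1 + k 2 + 2 * k 3 ∧
  p 1 + 2 * p 3 + p 4 + p 5 + p 6 + p 7 + p 8 + p 9 + p 10 + p 11 ≤ k 0 + 2 * k 1 + k 2 + 2 * k 3 ∧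
  p 0 + p 1 + p 2 + 2 * p 3 + p 4 + p 5 + p 6 + p 7 + p 8 + p 10 ≤ k 0 + 2 * k 1 + k 2 + 2 * k 3 ∧
  p 0 + p 1 + 2 * p 3 + p 4 + p 5 + p 6 + p 7 + p 8 + p 9 + p 10 ≤ k 0 + 2 * k 1 + k 2 + 2 * k 3 ∧
  p 1 + p 2 + 2 * p 3 + 2 * p 4 + p 5 + p 6 + p 8 + p 10 + p 11 ≤ k 0 + 2 * k 1 + k 2 + 2 * k 3 ∧
  p 1 + 2 * p 3 + 2 * p 4 + p 5 + p 6 + p 8 + p 9 + p 10 + p 11 ≤ k 0 + 2 * k 1 + k 2 + 2 * k 3 ∧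
  p 2 + p 3 + p 4 + p 5 + 2 * p 6 + p 7 + p 8 + p 10 + 2 * p 11 ≤ 2 * k 0 + 2 * k 1 + k 2 + k 3 ∧
  p 3 + p 4 + p 5 + 2 * p 6 + p 7 + p 8 + p 9 + p 10 + 2 * p 11 ≤ 2 * k 0 + 2 * k 1 + k 2 + k 3 ∧
  p 1 + p 2 + p 3 + p 4 + 2 * p 6 + p 7 + p 8 + p 10 + 2 * p 11 ≤ 2 * k 0 + 2 * k 1 + k 2 + k 3 ∧
  p 1 + p 3 + p 4 + 2 * p 6 + p 7 + p 8 + p 9 + p 10 + 2 * p 11 ≤ 2 * k 0 + 2 * k 1 + k 2 + k 3 ∧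
  p 0 + p 1 + p 2 + 2 * p 3 + p 4 + p 5 + p 6 + p 7 + 2 * p 8 + p 9 + p 10 ≤ k 0 + 2 * k 1 + 2 * k 2 + 2 * k 3 ∧
  p 1 + p 2 + 2 * p 3 + p 4 + p 5 + p 6 + p 7 + 2 * p 8 + p 9 + p 10 + p 11 ≤ k 0 + 2 * k 1 + 2 * k 2 + 2 * k 3 ∧
  p 1 + p 2 + 2 * p 3 + 2 * p 4 + p 5 + p 6 + 2 * p 8 + p 9 + p 10 + p 11 ≤ k 0 + 2 * k 1 + 2 * k 2 + 2 * k 3 ∧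
  p 1 + p 2 + 2 * p 3 + p 4 + p 5 + 2 * p 6 + p 7 + p 8 + p 10 + 2 * p 11 ≤ 2 * k 0 + 2 * k 1 + k 2 + 2 * k 3 ∧
  p 1 + 2 * p 3 + p 4 + p 5 + 2 * p 6 + p 7 + p 8 + p 9 + p 10 + 2 * p 11 ≤ 2 * k 0 + 2 * k 1 + k 2 + 2 * k 3 ∧
  p 1 + p 2 + 2 * p 3 + 2 * p 4 + p 5 + 2 * p 6 + p 8 + p 10 + 2 * p 11 ≤ 2 * k 0 + 2 * k 1 + k 2 + 2 * k 3 ∧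
  p 1 + 2 * p 3 + 2 * p 4 + p 5 + 2 * p 6 + p 8 + p 9 + p 10 + 2 * p 11 ≤ 2 * k 0 + 2 * k 1 + k 2 + 2 * k 3 ∧
  p 1 + p 2 + p 3 + p 4 + 2 * p 6 + p 7 + 2 * p 8 + p 9 + p 10 + 2 * p 11 ≤ 2 * k 0 + 2 * k 1 + 2 * k 2 + k 3 ∧
  p 2 + p 3 + p 4 + p 5 + 2 * p 6 + p 7 + 2 * p 8 + p 9 + p 10 + 2 * p 11 ≤ 2 * k 0 + 2 * k 1 + 2 * k 2 + k 3 ∧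
  p 1 + p 3 + p 4 + 2 * p 6 + p 7 + 2 * p 8 + 2 * p 9 + p 10 + 2 * p 11 ≤ 2 * k 0 + 2 * k 1 + 2 * k 2 + k 3 ∧
  p 1 + p 2 + 2 * p 3 + p 4 + p 5 + 2 * p 6 + p 7 + 2 * p 8 + p 9 + p 10 + 2 * p 11 ≤ 2 * k 0 + 2 * k 1 + 2 * k 2 + 2 * k 3 ∧
  p 1 + p 2 + 2 * p 3 + 2 * p 4 + p 5 + 2 * p 6 + 2 * p 8 + p 9 + p 10 + 2 * p 11 ≤ 2 * k 0 + 2 * k 1 + 2 * k 2 + 2 * k 3 ∧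
  p 1 + p 2 + 2 * p 3 + 2 * p 4 + p 5 + p 6 + p 7 + p 8 + 2 * p 10 + p 11 ≤ k 0 + 3 * k 1 + k 2 + 2 * k 3 ∧
  p 1 + 2 * p 3 + 2 * p 4 + p 5 + p 6 + p 7 + p 8 + p 9 + 2 * p 10 + p 11 ≤ k 0 + 3 * k 1 + k 2 + 2 * k 3 ∧
  p 0 + p 1 + p 2 + 2 * p 3 + 2 * p 4 + p 5 + p 6 + p 7 + p 8 + 2 * p 10 ≤ k 0 + 3 * k 1 + k 2 + 2 * k 3 ∧
  p 0 + p 1 + 2 * p 3 + 2 * p 4 + p 5 + p 6 + p 7 + p 8 + p 9 + 2 * p 10 ≤ k 0 + 3 * k 1 + k 2 + 2 * k 3 ∧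
  p 0 + p 1 + 2 * p 3 + 2 * p 4 + p 5 + p 6 + p 7 + 2 * p 8 + 2 * p 9 + 2 * p 10 ≤ k 0 + 3 * k 1 + 2 * k 2 + 2 * k 3 ∧
  p 1 + 2 * p 3 + 2 * p 4 + p 5 + p 6 + p 7 + 2 * p 8 + 2 * p 9 + 2 * p 10 + p 11 ≤ k 0 + 3 * k 1 + 2 * k 2 + 2 * k 3 ∧
  p 0 + p 1 + 2 * p 3 + 2 * p 4 + p 5 + 2 * p 6 + p 7 + p 8 + p 9 + 2 * p 10 + p 11 ≤ 2 * k 0 + 3 * k 1 + k 2 + 2 * k 3 ∧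
  p 0 + p 1 + p 2 + 2 * p 3 + 2 * p 4 + p 5 + 2 * p 6 + p 7 + p 8 + 2 * p 10 + p 11 ≤ 2 * k 0 + 3 * k 1 + k 2 + 2 * k 3 ∧
  p 0 + p 1 + 2 * p 3 + 2 * p 4 + p 5 + 2 * p 6 + p 7 + 2 * p 8 + 2 * p 9 + 2 * p 10 + p 11 ≤ 2 * k 0 + 3 * k 1 + 2 * k 2 + 2 * k 3 ∧
  p 1 + p 2 + 2 * p 3 + 2 * p 4 + p 5 + p 6 + p 7 + 3 * p 8 + 2 * p 9 + 2 * p 10 + p 11 ≤ k 0 + 3 * k 1 + 3 * k 2 + 2 * k 3 ∧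
  p 0 + p 1 + p 2 + 2 * p 3 + 2 * p 4 + p 5 + p 6 + p 7 + 3 * p 8 + 2 * p 9 + 2 * p 10 ≤ k 0 + 3 * k 1 + 3 * k 2 + 2 * k 3 ∧
  p 1 + p 2 + 2 * p 3 + 2 * p 4 + p 5 + 3 * p 6 + p 7 + p 8 + 2 * p 10 + 3 * p 11 ≤ 3 * k 0 + 3 * k 1 + k 2 + 2 * k 3 ∧
  p 1 + 2 * p 3 + 2 * p 4 + p 5 + 3 * p 6 + p 7 + p 8 + p 9 + 2 * p 10 + 3 * p 11 ≤ 3 * k 0 + 3 * k 1 + k 2 + 2 * k 3 ∧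
  p 1 + p 2 + 2 * p 3 + 2 * p 4 + p 5 + 3 * p 6 + p 7 + 3 * p 8 + 2 * p 9 + 2 * p 10 + 3 * p 11 ≤ 3 * k 0 + 3 * k 1 + 3 * k 2 + 2 * k 3 ∧
  p 0 + p 1 + p 2 + 2 * p 3 + 2 * p 4 + p 5 + 2 * p 6 + p 7 + 3 * p 8 + 2 * p 9 + 2 * p 10 + p 11 ≤ 2 * k 0 + 3 * k 1 + 3 * k 2 + 2 * k 3 ∧
  p 1 + 2 * p 3 + 2 * p 4 + p 5 + 3 * p 6 + p 7 + 2 * p 8 + 2 * p 9 + 2 * p 10 + 3 * p 11 ≤ 3 * k 0 + 3 * k 1 + 2 * k 2 + 2 * k 3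

/-- Σ(k): the set of 12-tuples of nonnegative integers satisfying the 70 inequalities. -/
def SigmaSet (k : Fin 4 → ℤ) : Set (Fin 12 → ℤ) :=
  {p | (∀ j, 0 ≤ p j) ∧ SatisfiesIneqs k p}

/-- The 52 fundamental generators in (ℤ^4) × (ℤ^12). -/
def gens : Fin 52 → (Fin 4 → ℤ) × (Fin 12 → ℤ) :=
  ![
    (Pi.single 0 1, 0),
    (Pi.single 0 1, Pi.single 11 1),
    (Pi.single 0 1, Pi.single 7 1),
    (Pi.single 0 1, Pi.single 6 1),
    (Pi.single 0 1, Pi.single 5 1),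
    (Pi.single 0 1, Pi.single 2 1),
    (Pi.single 0 1, Pi.single 0 1),
    (Pi.single 0 1, Pi.single 0 1 + Pi.single 11 1),
    (Pi.single 1 1, 0),
    (Pi.single 1 1, Pi.single 10 1),
    (Pi.single 1 1, Pi.single 9 1),
    (Pi.single 1 1, Pi.single 7 1),
    (Pi.single 1 1, Pi.single 6 1),
    (Pi.single 1 1, Pi.single 5 1),
    (Pi.single 1 1, Pi.single 4 1),
    (Pi.single 1 1, Pi.single 2 1),
    (Pi.single 1 1, Pi.single 1 1),
    (Pi.single 1 1, Pi.single 0 1),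
    (Pi.single 1 1, Pi.single 7 1 + Pi.single 10 1),
    (Pi.single 1 1, Pi.single 5 1 + Pi.single 10 1),
    (Pi.single 1 1, Pi.single 2 1 + Pi.single 10 1),
    (Pi.single 1 1, Pi.single 1 1 + Pi.single 10 1),
    (Pi.single 1 1, Pi.single 0 1 + Pi.single 10 1),
    (Pi.single 1 1, Pi.single 5 1 + Pi.single 9 1),
    (Pi.single 1 1, Pi.single 2 1 + Pi.single 9 1),
    (Pi.single 1 1, Pi.single 0 1 + Pi.single 9 1),
    (Pi.single 1 1, Pi.single 5 1 + Pi.single 7 1),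
    (Pi.single 1 1, Pi.single 4 1 + Pi.single 7 1),
    (Pi.single 1 1, Pi.single 0 1 + Pi.single 7 1),
    (Pi.single 1 1, Pi.single 0 1 + Pi.single 6 1),
    (Pi.single 1 1, Pi.single 1 1 + Pi.single 5 1),
    (Pi.single 1 1, Pi.single 0 1 + Pi.single 5 1),
    (Pi.single 1 1, Pi.single 0 1 + Pi.single 4 1),
    (Pi.single 1 1, Pi.single 0 1 + Pi.single 2 1),
    (Pi.single 1 1, Pi.single 0 1 + Pi.single 1 1),
    (Pi.single 1 1, Pi.single 0 2),
    (Pi.single 2 1, 0),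
    (Pi.single 2 1, Pi.single 9 1),
    (Pi.single 2 1, Pi.single 8 1),
    (Pi.single 2 1, Pi.single 7 1),
    (Pi.single 2 1, Pi.single 2 1),
    (Pi.single 2 1, Pi.single 1 1),
    (Pi.single 2 1, Pi.single 0 1),
    (Pi.single 2 1, Pi.single 2 1 + Pi.single 9 1),
    (Pi.single 3 1, 0),
    (Pi.single 3 1, Pi.single 5 1),
    (Pi.single 3 1, Pi.single 4 1),
    (Pi.single 3 1, Pi.single 3 1),
    (Pi.single 3 1, Pi.single 2 1),
    (Pi.single 3 1, Pi.single 1 1),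
    (Pi.single 3 1, Pi.single 0 1),
    (Pi.single 3 1, Pi.single 1 1 + Pi.single 5 1)]

/-!
The argument is an integral version of the pulling triangulation. Let `v` be a generator on which
every facet functional of a face takes the value `0` or `1`. Subtracting from a lattice point `x` of
that face the multiple `n • v`, where `n` is the least value at `x` among the functionals with value
`1` at `v`, leaves a lattice point of a facet not containing `v`. By induction on the dimension, all
lattice points are generated as soon as such a `v` exists on each face that is met in this way.
Whether it does depends only on which functionals take the values `0` and `1` on which generators,
and is decided by a computation.
-/

theorem finrank_inf_ker_lt {R M : Type*} [CommRing R] [IsDomain R] [AddCommGroup M] [Module R M]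
    {W : Submodule R M} [Module.Finite R W] {φ : M →ₗ[R] R} {v : M} (hv : v ∈ W) (hφ : φ v ≠ 0) :
    Module.finrank R ↥(W ⊓ LinearMap.ker φ) < Module.finrank R W := by
  have hrank := (LinearMap.ker (φ.domRestrict W)).finrank_quotient_add_finrank
  rw [(φ.domRestrict W).quotKerEquivRange.finrank_eq, LinearMap.ker_domRestrict,
    (W.equivSubtypeMap _).finrank_eq, Submodule.map_comap_subtype] at hrank
  have : Nontrivial (LinearMap.range (φ.domRestrict W)) :=
    ⟨⟨⟨φ v, ⟨v, hv⟩, rfl⟩, 0, fun h => hφ (congrArg Subtype.val h)⟩⟩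
  have hpos : 0 < Module.finrank R (LinearMap.range (φ.domRestrict W)) := Module.finrank_pos
  lia

section LatticeCone

variable {M : Type*} [AddCommGroup M]

/-- The lattice points of the cone cut out by the inequalities `0 ≤ φ`, `φ ∈ Φ`, inside the
sublattice `W`. Faces of a cone are obtained by keeping `Φ` and shrinking `W`. -/
def latticeCone (W : Submodule ℤ M) (Φ : Set (M →ₗ[ℤ] ℤ)) : Set M :=
  {x | x ∈ W ∧ ∀ φ ∈ Φ, 0 ≤ φ x}

theorem latticeCone_anti {W : Submodule ℤ M} {Φ Ψ : Set (M →ₗ[ℤ] ℤ)} (h : Ψ ⊆ Φ) :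
    latticeCone W Φ ⊆ latticeCone W Ψ :=
  fun _ hx => ⟨hx.1, fun φ hφ => hx.2 φ (h hφ)⟩

theorem latticeCone_subset_of_pulling {W : Submodule ℤ M} {Φ : Set (M →ₗ[ℤ] ℤ)}
    {S : AddSubmonoid M} {v : M} (hΦ : Φ.Finite) (hvS : v ∈ S) (hvW : v ∈ W)
    (hle : ∀ φ ∈ Φ, φ v ≤ 1) (hex : ∃ φ ∈ Φ, φ v = 1)
    (hface : ∀ φ ∈ Φ, φ v = 1 → latticeCone (W ⊓ LinearMap.ker φ) Φ ⊆ S) :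
    latticeCone W Φ ⊆ S := by
  rintro x ⟨hxW, hx⟩
  obtain ⟨φ, ⟨hφ, hφv⟩, hmin⟩ :=
    Set.exists_min_image {φ ∈ Φ | φ v = 1} (· x) (hΦ.subset fun _ h => h.1) hex
  obtain ⟨n, hn⟩ := Int.eq_ofNat_of_zero_le (hx φ hφ)
  have hy : x - n • v ∈ latticeCone (W ⊓ LinearMap.ker φ) Φ := by
    refine ⟨⟨W.sub_mem hxW (W.smul_of_tower_mem n hvW), ?_⟩, fun ψ hψ => ?_⟩
    · simp [hφv, hn]
    · rw [map_sub, map_nsmul, nsmul_eq_mul, sub_nonneg]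
      rcases (hle ψ hψ).lt_or_eq with hlt | heq
      · exact (mul_nonpos_of_nonneg_of_nonpos n.cast_nonneg (Int.lt_add_one_iff.mp hlt)).trans
          (hx ψ hψ)
      · simpa [heq, ← hn] using hmin ψ ⟨hψ, heq⟩
  rw [← sub_add_cancel x (n • v)]
  exact S.add_mem (hface φ hφ hφv hy) (S.nsmul_mem hvS n)

end LatticeCone

section Pullable

variable {α M : Type*} [AddCommGroup M] {m : ℕ}

/-- `List.all`, written with recursors, which the kernel evaluates faster. -/
def kernelAll (p : α → Bool) (l : List α) : Bool :=
  List.rec true (fun a _ ih => Bool.rec false ih (p a)) l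

/-- `List.filter`, written with recursors, which the kernel evaluates faster. -/
def kernelFilter (p : α → Bool) (l : List α) : List α :=
  List.rec [] (fun a _ ih => Bool.rec ih (a :: ih) (p a)) l

theorem kernelAll_eq_all (p : α → Bool) (l : List α) : kernelAll p l = l.all p := by
  induction l with
  | nil => rfl
  | cons a l ih =>
    rw [List.all_cons, ← ih]
    change Bool.rec (motive := fun _ => Bool) false (kernelAll p l) (p a) = _
    cases p a <;> rfl

theorem kernelFilter_eq_filter (p : α → Bool) (l : List α) : kernelFilter p l = l.filter p := by
  induction l with
  | nil => rfl
  | cons a l ih =>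
    rw [List.filter_cons, ← ih]
    change Bool.rec (motive := fun _ => List α) (kernelFilter p l) (a :: kernelFilter p l) (p a) =
      _
    cases p a <;> rfl

/-- Inclusion of finite sets of natural numbers, each encoded by the binary digits of a number, in
terms of operations that the kernel computes natively. -/
def maskSubset (a b : ℕ) : Bool := Nat.beq (Nat.land a b) a

theorem testBit_of_maskSubset {a b j : ℕ} (h : maskSubset a b) (ha : a.testBit j) :
    b.testBit j := by
  have hab : a &&& b = a := Nat.eq_of_beq_eq_true h
  rw [← hab, Nat.testBit_and, Bool.and_eq_true] at ha
  exact ha.2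

/-- The set of the indices `j` such that `φ (g j) = c`, encoded by the binary digits of a number. -/
def levelMask (g : Fin m → M) (φ : M →ₗ[ℤ] ℤ) (c : ℤ) : ℕ :=
  Nat.ofBits fun j => decide (φ (g j) = c)

theorem testBit_levelMask {g : Fin m → M} {φ : M →ₗ[ℤ] ℤ} {c : ℤ} {j : Fin m} :
    (levelMask g φ c).testBit j ↔ φ (g j) = c := by
  simp [levelMask]

theorem apply_eq_of_maskSubset_levelMask {g : Fin m → M} {φ : M →ₗ[ℤ] ℤ} {c : ℤ} {j : Fin m}
    (h : maskSubset (2 ^ (j : ℕ)) (levelMask g φ c)) : φ (g j) = c :=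
  testBit_levelMask.mp (testBit_of_maskSubset h Nat.testBit_two_pow_self)

/-- The facets opposite to the apex `v` of the face spanned by the generators in `G`: among the
members of `A` with value `1` at `v`, those whose zero set on `G` is maximal. -/
def oppositeFacets (g : Fin m → M) (G v : ℕ) (A : List (M →ₗ[ℤ] ℤ)) : List (M →ₗ[ℤ] ℤ) :=
  let B := kernelFilter (fun φ => maskSubset v (levelMask g φ 1)) A
  kernelFilter (fun φ => kernelAll (fun ψ =>
    bif maskSubset (Nat.land G (levelMask g φ 0)) (levelMask g ψ 0) then
      maskSubset (Nat.land G (levelMask g ψ 0)) (levelMask g φ 0) else true) B) B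

/-- The members of `A` that vanish at the apex `v` but not on all generators in `G`. -/
def facetsThrough (g : Fin m → M) (G v : ℕ) (A : List (M →ₗ[ℤ] ℤ)) : List (M →ₗ[ℤ] ℤ) :=
  kernelFilter (fun φ => maskSubset v (levelMask g φ 0) && !maskSubset G (levelMask g φ 0)) A

/-- Whether pulling, on each face in turn, the generator with the largest index succeeds `n` times
in succession, starting from the face spanned by the generators in `G`, in the cone cut out by `A`.
Functionals with a value other than `0` and `1` at the apex, and those that cut out a smaller face
than another one, are dropped; this can only enlarge the cone. -/
def pullable (g : Fin m → M) : ℕ → ℕ → List (M →ₗ[ℤ] ℤ) → Bool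
  | 0, _, _ => true
  | n + 1, G, A =>
    let v := Nat.pow 2 (Nat.log2 G)
    let opp := oppositeFacets g G v A
    let A' := opp ++ facetsThrough g G v A
    maskSubset v G && !opp.isEmpty &&
      kernelAll (fun φ => pullable g n (Nat.land G (levelMask g φ 0)) A') opp

theorem mem_and_apply_eq_one_of_mem_oppositeFacets {g : Fin m → M} {G : ℕ} {j : Fin m}
    {A : List (M →ₗ[ℤ] ℤ)} {φ : M →ₗ[ℤ] ℤ} (h : φ ∈ oppositeFacets g G (2 ^ (j : ℕ)) A) :
    φ ∈ A ∧ φ (g j) = 1 := by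
  rw [oppositeFacets, kernelFilter_eq_filter, kernelFilter_eq_filter] at h
  obtain ⟨hA, hj⟩ := List.mem_filter.mp (List.mem_of_mem_filter h)
  exact ⟨hA, apply_eq_of_maskSubset_levelMask hj⟩

theorem mem_and_apply_eq_zero_of_mem_facetsThrough {g : Fin m → M} {G : ℕ} {j : Fin m}
    {A : List (M →ₗ[ℤ] ℤ)} {φ : M →ₗ[ℤ] ℤ} (h : φ ∈ facetsThrough g G (2 ^ (j : ℕ)) A) :
    φ ∈ A ∧ φ (g j) = 0 := by
  rw [facetsThrough, kernelFilter_eq_filter] at h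
  obtain ⟨hA, hj⟩ := List.mem_filter.mp h
  exact ⟨hA, apply_eq_of_maskSubset_levelMask (Bool.and_eq_true_iff.mp hj).1⟩

theorem latticeCone_subset_of_oppositeFacets {g : Fin m → M} {S : AddSubmonoid M} {G : ℕ}
    {A : List (M →ₗ[ℤ] ℤ)} {W : Submodule ℤ M} {j : Fin m} (hjS : g j ∈ S) (hjW : g j ∈ W)
    (hne : oppositeFacets g G (2 ^ (j : ℕ)) A ≠ [])
    (hface : ∀ φ ∈ oppositeFacets g G (2 ^ (j : ℕ)) A, latticeCone (W ⊓ LinearMap.ker φ)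
      {ψ | ψ ∈ oppositeFacets g G (2 ^ (j : ℕ)) A ++ facetsThrough g G (2 ^ (j : ℕ)) A} ⊆ S) :
    latticeCone W {φ | φ ∈ A} ⊆ S := by
  have hsub : {φ | φ ∈ oppositeFacets g G (2 ^ (j : ℕ)) A ++ facetsThrough g G (2 ^ (j : ℕ)) A} ⊆
      {φ | φ ∈ A} := fun φ hφ =>
    (List.mem_append.mp hφ).elim (fun h => (mem_and_apply_eq_one_of_mem_oppositeFacets h).1)
      fun h => (mem_and_apply_eq_zero_of_mem_facetsThrough h).1
  obtain ⟨φ₀, hφ₀⟩ := List.exists_mem_of_ne_nil _ hne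
  refine (latticeCone_anti hsub).trans (latticeCone_subset_of_pulling
    (List.finite_toSet _) hjS hjW (fun φ hφ => ?_)
    ⟨φ₀, List.mem_append_left _ hφ₀, (mem_and_apply_eq_one_of_mem_oppositeFacets hφ₀).2⟩
    fun φ hφ hφj => hface φ ((List.mem_append.mp hφ).resolve_right fun h => ?_))
  · rcases List.mem_append.mp hφ with h | h
    · exact (mem_and_apply_eq_one_of_mem_oppositeFacets h).2.le
    · exact (mem_and_apply_eq_zero_of_mem_facetsThrough h).2.le.trans zero_le_one
  · exact zero_ne_one ((mem_and_apply_eq_zero_of_mem_facetsThrough h).2.symm.trans hφj)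

theorem latticeCone_subset_of_pullable [Module.Finite ℤ M] [Module.IsTorsionFree ℤ M]
    {g : Fin m → M} {S : AddSubmonoid M} (hg : ∀ j, g j ∈ S) {n G : ℕ} {A : List (M →ₗ[ℤ] ℤ)}
    {W : Submodule ℤ M} (hA : pullable g n G A) (hW : Module.finrank ℤ W ≤ n)
    (hG : ∀ i, G.testBit i → ∃ hi : i < m, g ⟨i, hi⟩ ∈ W) :
    latticeCone W {φ | φ ∈ A} ⊆ S := by
  induction n generalizing G A W with
  | zero =>
    rintro x ⟨hx, -⟩
    rw [Submodule.finrank_eq_zero.mp (Nat.le_zero.mp hW), Submodule.mem_bot] at hx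
    exact hx ▸ S.zero_mem
  | succ n ih =>
    simp only [pullable, Bool.and_eq_true, Bool.not_eq_true', List.isEmpty_eq_false_iff,
      kernelAll_eq_all, List.all_eq_true] at hA
    obtain ⟨⟨hvG, hne⟩, hfaces⟩ := hA
    obtain ⟨hm, hjW⟩ := hG (Nat.log2 G) (testBit_of_maskSubset hvG Nat.testBit_two_pow_self)
    refine latticeCone_subset_of_oppositeFacets (j := ⟨Nat.log2 G, hm⟩) (hg _) hjW hne
      fun φ hφ => ih (hfaces φ hφ) ?_ fun i hi => ?_
    · have hφj := (mem_and_apply_eq_one_of_mem_oppositeFacets hφ).2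
      exact Nat.lt_succ_iff.mp ((finrank_inf_ker_lt hjW (by simp [hφj])).trans_le hW)
    · obtain ⟨hiG, hiφ⟩ := Bool.and_eq_true_iff.mp ((Nat.testBit_and _ _ _).symm.trans hi)
      obtain ⟨him, hiW⟩ := hG i hiG
      exact ⟨him, hiW, testBit_levelMask.mp hiφ⟩

end Pullable

/-- The coefficients `(a, b)` of the inequalities `∑ j, b j * p j ≤ ∑ i, a i * k i` that define
`Σ(k)`. -/
def sigmaCoeffs : List ((Fin 4 → ℤ) × (Fin 12 → ℤ)) := [
  (![1, 0, 0, 0], ![0, 0, 0, 0, 0, 0, 0, 0, 0, 0, 0, 1]),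
  (![0, 1, 0, 0], ![0, 0, 0, 0, 0, 0, 0, 0, 0, 0, 1, 0]),
  (![0, 0, 1, 0], ![0, 0, 0, 0, 0, 0, 0, 0, 1, 0, 0, 0]),
  (![0, 0, 0, 1], ![0, 0, 0, 1, 0, 0, 0, 0, 0, 0, 0, 0]),
  (![1, 1, 0, 0], ![0, 0, 0, 0, 0, 0, 1, 0, 0, 0, 1, 1]),
  (![1, 1, 1, 0], ![0, 0, 0, 0, 0, 0, 1, 1, 1, 1, 0, 1]),
  (![1, 1, 1, 0], ![0, 0, 0, 0, 0, 0, 1, 0, 1, 1, 1, 1]),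
  (![0, 1, 1, 0], ![0, 0, 0, 0, 0, 0, 0, 0, 1, 1, 1, 0]),
  (![1, 1, 0, 1], ![0, 0, 0, 1, 1, 1, 1, 0, 0, 0, 0, 1]),
  (![1, 1, 0, 1], ![0, 0, 0, 1, 1, 0, 1, 0, 0, 0, 1, 1]),
  (![0, 1, 0, 1], ![0, 0, 0, 1, 1, 0, 0, 0, 0, 0, 1, 0]),
  (![0, 1, 1, 1], ![0, 1, 0, 1, 1, 0, 0, 0, 1, 1, 0, 0]),
  (![0, 1, 1, 1], ![0, 0, 0, 1, 1, 0, 0, 0, 1, 1, 1, 0]),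
  (![1, 1, 1, 1], ![0, 0, 1, 1, 1, 1, 1, 0, 1, 0, 0, 1]),
  (![1, 1, 1, 1], ![0, 1, 1, 1, 1, 0, 1, 0, 1, 0, 0, 1]),
  (![1, 1, 1, 1], ![0, 1, 1, 1, 0, 0, 1, 1, 1, 0, 0, 1]),
  (![1, 1, 1, 1], ![0, 1, 0, 1, 0, 0, 1, 1, 1, 1, 0, 1]),
  (![1, 1, 1, 1], ![0, 0, 0, 1, 1, 0, 1, 0, 1, 1, 1, 1]),
  (![1, 1, 1, 1], ![0, 1, 0, 1, 1, 0, 1, 0, 1, 1, 0, 1]),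
  (![1, 2, 1, 1], ![1, 0, 1, 1, 1, 1, 1, 1, 1, 0, 1, 0]),
  (![1, 2, 1, 1], ![1, 1, 1, 1, 1, 0, 1, 1, 1, 0, 1, 0]),
  (![1, 2, 1, 1], ![0, 0, 1, 1, 1, 1, 1, 1, 1, 0, 1, 1]),
  (![1, 2, 1, 1], ![0, 1, 1, 1, 1, 0, 1, 1, 1, 0, 1, 1]),
  (![1, 2, 1, 1], ![1, 1, 0, 1, 1, 0, 1, 1, 1, 1, 1, 0]),
  (![1, 2, 1, 1], ![0, 1, 0, 1, 1, 0, 1, 1, 1, 1, 1, 1]),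
  (![1, 2, 1, 1], ![1, 0, 0, 1, 1, 1, 1, 1, 1, 1, 1, 0]),
  (![1, 2, 1, 1], ![0, 0, 0, 1, 1, 1, 1, 1, 1, 1, 1, 1]),
  (![1, 2, 2, 1], ![0, 1, 1, 1, 1, 0, 1, 1, 2, 1, 1, 1]),
  (![1, 2, 2, 1], ![0, 0, 1, 1, 1, 1, 1, 1, 2, 1, 1, 1]),
  (![1, 2, 2, 1], ![1, 1, 1, 1, 1, 0, 1, 1, 2, 1, 1, 0]),
  (![1, 2, 2, 1], ![1, 0, 1, 1, 1, 1, 1, 1, 2, 1, 1, 0]),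
  (![1, 2, 2, 1], ![0, 1, 0, 1, 1, 0, 1, 1, 2, 2, 1, 1]),
  (![1, 2, 1, 2], ![0, 1, 1, 2, 1, 1, 1, 1, 1, 0, 1, 1]),
  (![1, 2, 1, 2], ![0, 1, 0, 2, 1, 1, 1, 1, 1, 1, 1, 1]),
  (![1, 2, 1, 2], ![1, 1, 1, 2, 1, 1, 1, 1, 1, 0, 1, 0]),
  (![1, 2, 1, 2], ![1, 1, 0, 2, 1, 1, 1, 1, 1, 1, 1, 0]),
  (![1, 2, 1, 2], ![0, 1, 1, 2, 2, 1, 1, 0, 1, 0, 1, 1]),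
  (![1, 2, 1, 2], ![0, 1, 0, 2, 2, 1, 1, 0, 1, 1, 1, 1]),
  (![2, 2, 1, 1], ![0, 0, 1, 1, 1, 1, 2, 1, 1, 0, 1, 2]),
  (![2, 2, 1, 1], ![0, 0, 0, 1, 1, 1, 2, 1, 1, 1, 1, 2]),
  (![2, 2, 1, 1], ![0, 1, 1, 1, 1, 0, 2, 1, 1, 0, 1, 2]),
  (![2, 2, 1, 1], ![0, 1, 0, 1, 1, 0, 2, 1, 1, 1, 1, 2]),
  (![1, 2, 2, 2], ![1, 1, 1, 2, 1, 1, 1, 1, 2, 1, 1, 0]),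
  (![1, 2, 2, 2], ![0, 1, 1, 2, 1, 1, 1, 1, 2, 1, 1, 1]),
  (![1, 2, 2, 2], ![0, 1, 1, 2, 2, 1, 1, 0, 2, 1, 1, 1]),
  (![2, 2, 1, 2], ![0, 1, 1, 2, 1, 1, 2, 1, 1, 0, 1, 2]),
  (![2, 2, 1, 2], ![0, 1, 0, 2, 1, 1, 2, 1, 1, 1, 1, 2]),
  (![2, 2, 1, 2], ![0, 1, 1, 2, 2, 1, 2, 0, 1, 0, 1, 2]),
  (![2, 2, 1, 2], ![0, 1, 0, 2, 2, 1, 2, 0, 1, 1, 1, 2]),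
  (![2, 2, 2, 1], ![0, 1, 1, 1, 1, 0, 2, 1, 2, 1, 1, 2]),
  (![2, 2, 2, 1], ![0, 0, 1, 1, 1, 1, 2, 1, 2, 1, 1, 2]),
  (![2, 2, 2, 1], ![0, 1, 0, 1, 1, 0, 2, 1, 2, 2, 1, 2]),
  (![2, 2, 2, 2], ![0, 1, 1, 2, 1, 1, 2, 1, 2, 1, 1, 2]),
  (![2, 2, 2, 2], ![0, 1, 1, 2, 2, 1, 2, 0, 2, 1, 1, 2]),
  (![1, 3, 1, 2], ![0, 1, 1, 2, 2, 1, 1, 1, 1, 0, 2, 1]),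
  (![1, 3, 1, 2], ![0, 1, 0, 2, 2, 1, 1, 1, 1, 1, 2, 1]),
  (![1, 3, 1, 2], ![1, 1, 1, 2, 2, 1, 1, 1, 1, 0, 2, 0]),
  (![1, 3, 1, 2], ![1, 1, 0, 2, 2, 1, 1, 1, 1, 1, 2, 0]),
  (![1, 3, 2, 2], ![1, 1, 0, 2, 2, 1, 1, 1, 2, 2, 2, 0]),
  (![1, 3, 2, 2], ![0, 1, 0, 2, 2, 1, 1, 1, 2, 2, 2, 1]),
  (![2, 3, 1, 2], ![1, 1, 0, 2, 2, 1, 2, 1, 1, 1, 2, 1]),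
  (![2, 3, 1, 2], ![1, 1, 1, 2, 2, 1, 2, 1, 1, 0, 2, 1]),
  (![2, 3, 2, 2], ![1, 1, 0, 2, 2, 1, 2, 1, 2, 2, 2, 1]),
  (![1, 3, 3, 2], ![0, 1, 1, 2, 2, 1, 1, 1, 3, 2, 2, 1]),
  (![1, 3, 3, 2], ![1, 1, 1, 2, 2, 1, 1, 1, 3, 2, 2, 0]),
  (![3, 3, 1, 2], ![0, 1, 1, 2, 2, 1, 3, 1, 1, 0, 2, 3]),
  (![3, 3, 1, 2], ![0, 1, 0, 2, 2, 1, 3, 1, 1, 1, 2, 3]),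
  (![3, 3, 3, 2], ![0, 1, 1, 2, 2, 1, 3, 1, 3, 2, 2, 3]),
  (![2, 3, 3, 2], ![1, 1, 1, 2, 2, 1, 2, 1, 3, 2, 2, 1]),
  (![3, 3, 2, 2], ![0, 1, 0, 2, 2, 1, 3, 1, 2, 2, 2, 3])]

theorem satisfiesIneqs_iff {k : Fin 4 → ℤ} {p : Fin 12 → ℤ} :
    SatisfiesIneqs k p ↔ ∀ c ∈ sigmaCoeffs, c.2 ⬝ᵥ p ≤ c.1 ⬝ᵥ k := by
  simp [SatisfiesIneqs, sigmaCoeffs, Matrix.vecHead, Matrix.vecTail, add_assoc]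

/-- The linear form `∑ i, a i * k i - ∑ j, b j * p j` in `(k, p)`, where `c = (a, b)`. -/
def slack (c : (Fin 4 → ℤ) × (Fin 12 → ℤ)) : (Fin 4 → ℤ) × (Fin 12 → ℤ) →ₗ[ℤ] ℤ where
  toFun x := c.1 ⬝ᵥ x.1 - c.2 ⬝ᵥ x.2
  map_add' x y := by simp only [Prod.fst_add, Prod.snd_add, dotProduct_add]; ring
  map_smul' r x := by simp only [Prod.smul_fst, Prod.smul_snd, dotProduct_smul, smul_sub,
    RingHom.id_apply]

/-- The linear forms defining the cone of the pairs `(k, p)` with `p ∈ Σ(k)`. -/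
def sigmaForms : List ((Fin 4 → ℤ) × (Fin 12 → ℤ) →ₗ[ℤ] ℤ) :=
  List.ofFn (fun j => LinearMap.proj j ∘ₗ LinearMap.snd ℤ (Fin 4 → ℤ) (Fin 12 → ℤ)) ++
    sigmaCoeffs.map slack

-- Generators 1 and 35 are exchanged because the pulling gets stuck in the order of `gens`.
theorem pullable_sigmaForms : pullable (gens ∘ Equiv.swap 1 35) 16 (2 ^ 52 - 1) sigmaForms := by
  decide +kernel

theorem sigmaForms_nonneg {k : Fin 4 → ℤ} {p : Fin 12 → ℤ} (hp : p ∈ SigmaSet k) :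
    ∀ φ ∈ sigmaForms, 0 ≤ φ (k, p) := by
  intro φ hφ
  rcases List.mem_append.mp hφ with hφ | hφ
  · obtain ⟨j, rfl⟩ := List.mem_ofFn.mp hφ
    exact hp.1 j
  · obtain ⟨c, hc, rfl⟩ := List.mem_map.mp hφ
    exact sub_nonneg.mpr (satisfiesIneqs_iff.mp hp.2 c hc)

/-- The saturation property (Conjecture 2 of Vinberg) for D4: every lattice point of the cone
is a sum with nonnegative integer coefficients of the 52 fundamental generators. -/
theorem sigmaSet_saturation (k : Fin 4 → ℤ) (hk : ∀ i, 0 ≤ k i)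
    (p : Fin 12 → ℤ) (hp : p ∈ SigmaSet k) :
    ∃ c : Fin 52 → ℕ, (k, p) = ∑ t, (c t : ℤ) • gens t := by
  have hgens (j : Fin 52) :
      (gens ∘ Equiv.swap 1 35) j ∈ AddSubmonoid.closure (Set.range gens) :=
    AddSubmonoid.subset_closure ⟨_, rfl⟩
  have hbits (i : ℕ) (hi : (2 ^ 52 - 1).testBit i) :
      ∃ h : i < 52, (gens ∘ Equiv.swap 1 35) ⟨i, h⟩ ∈ (⊤ : Submodule ℤ _) := by
    rw [Nat.testBit_two_pow_sub_one] at hi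
    exact ⟨of_decide_eq_true hi, Submodule.mem_top⟩
  have hmem : (k, p) ∈ AddSubmonoid.closure (Set.range gens) :=
    latticeCone_subset_of_pullable (W := ⊤) hgens pullable_sigmaForms (by simp)
      hbits ⟨Submodule.mem_top, sigmaForms_nonneg hp⟩
  simpa only [natCast_zsmul] using AddSubmonoid.mem_closure_range_iff_of_fintype.mp hmem
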